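/- Let d ≥ 1, let Ω ⊆ ℝ^d be a nonempty bounded open set, let u : closure(Ω) → ℝ be bounded, and let ε > 0. Then for every x ∈ Ω_{2ε} one has −ε² Δ_∞^ε (u^ε)(x) ≤ 2 u^ε(x) − u^{2ε}(x) − u(x), where Δ_∞^ε is applied to the function u^ε defined on Ω_ε. -/

import Mathlib

open Metric Real Set Filter

noncomputable section

/-- The inner parallel set `Ω_ε = {x ∈ Ω : dist(x, ∂Ω) > ε}`. -/
def innerSet {d : ℕ} (Ω : Set (EuclideanSpace ℝ (Fin d))) (ε : ℝ) :
    Set (EuclideanSpace ℝ (Fin d)) :=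
  {x ∈ Ω | ε < Metric.infDist x (frontier Ω)}

/-- Upper envelope `u^ε(x) = sup_{y ∈ B(x;ε)} u(y)`. -/
def upperEnv {d : ℕ} (u : EuclideanSpace ℝ (Fin d) → ℝ) (ε : ℝ)
    (x : EuclideanSpace ℝ (Fin d)) : ℝ :=
  sSup (u '' Metric.closedBall x ε)

/-- Lower envelope `u_ε(x) = inf_{y ∈ B(x;ε)} u(y)`. -/
def lowerEnv {d : ℕ} (u : EuclideanSpace ℝ (Fin d) → ℝ) (ε : ℝ)
    (x : EuclideanSpace ℝ (Fin d)) : ℝ :=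
  sInf (u '' Metric.closedBall x ε)

/-- Finite-difference infinity-Laplacian `Δ_∞^ε u(x) = (u^ε(x) + u_ε(x) - 2u(x))/ε²`. -/
def nlInfLap {d : ℕ} (u : EuclideanSpace ℝ (Fin d) → ℝ) (ε : ℝ)
    (x : EuclideanSpace ℝ (Fin d)) : ℝ :=
  (upperEnv u ε x + lowerEnv u ε x - 2 * u x) / ε ^ 2

/-- Lower ε-slope `S_-^ε u(x) = (u(x) - u_ε(x))/ε`. -/
def lowerSlope {d : ℕ} (u : EuclideanSpace ℝ (Fin d) → ℝ) (ε : ℝ)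
    (x : EuclideanSpace ℝ (Fin d)) : ℝ :=
  (u x - lowerEnv u ε x) / ε

/-- Supremum norm of `u` over the set `S`. -/
def supNorm {d : ℕ} (S : Set (EuclideanSpace ℝ (Fin d)))
    (u : EuclideanSpace ℝ (Fin d) → ℝ) : ℝ :=
  sSup ((fun x => |u x|) '' S)

/-- `u` satisfies comparison with `β`-cones on `Ω`. -/
def ComparisonWithCones {d : ℕ} (Ω : Set (EuclideanSpace ℝ (Fin d))) (β : ℝ)
    (u : EuclideanSpace ℝ (Fin d) → ℝ) : Prop :=
  ∀ D : Set (EuclideanSpace ℝ (Fin d)), IsOpen D → closure D ⊆ Ω →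
    ∀ a : ℝ, 0 ≤ a → ∀ x₀ : EuclideanSpace ℝ (Fin d), x₀ ∉ D → ∀ x ∈ D,
      sInf ((fun ξ => u ξ - a * ‖ξ - x₀‖ ^ β) '' frontier D) ≤ u x - a * ‖x - x₀‖ ^ β ∧
      u x - a * ‖x - x₀‖ ^ β ≤ sSup ((fun ξ => u ξ - a * ‖ξ - x₀‖ ^ β) '' frontier D)

/-!
Taking suprema over closed balls is a semigroup in the radius: in a normed space `(u^ε)^ε = u^{2ε}`,
since a point within `2ε` of `x` can be reached in two steps of length at most `ε`. On the other
hand `x` lies in `B(y;ε)` for every `y ∈ B(x;ε)`, so `u(x) ≤ u^ε(y)` there and `(u^ε)_ε(x) ≥ u(x)`.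
-/

/-- The envelope `u^ε` on a general metric space: the supremum of `u` over closed `ε`-balls.
On a Euclidean space it is `upperEnv` by definition. -/
def supClosedBall {X α : Type*} [PseudoMetricSpace X] [SupSet α] (u : X → α) (ε : ℝ) (x : X) : α :=
  sSup (u '' closedBall x ε)

/-- The envelope `u_ε` on a general metric space: the infimum of `u` over closed `ε`-balls.
On a Euclidean space it is `lowerEnv` by definition. -/
def infClosedBall {X α : Type*} [PseudoMetricSpace X] [InfSet α] (u : X → α) (ε : ℝ) (x : X) : α :=
  sInf (u '' closedBall x ε)

/-- The finite-difference infinity-Laplacian `Δ_∞^ε u` on a general metric space.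
On a Euclidean space it is `nlInfLap` by definition. -/
def infLaplacian {X : Type*} [PseudoMetricSpace X] (u : X → ℝ) (ε : ℝ) (x : X) : ℝ :=
  (supClosedBall u ε x + infClosedBall u ε x - 2 * u x) / ε ^ 2

lemma subset_of_isPreconnected_of_disjoint_frontier {X : Type*} [TopologicalSpace X] {s t : Set X}
    (ht : IsPreconnected t) (hd : Disjoint t (frontier s)) (hts : (t ∩ s).Nonempty) : t ⊆ s := by
  have hcover : t ⊆ interior s ∪ interior sᶜ :=
    compl_frontier_eq_union_interior (s := s) ▸ hd.subset_compl_right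
  obtain ⟨x, hxt, hxs⟩ := hts
  have hx : x ∈ interior s := (hcover hxt).resolve_right fun h => interior_subset h hxs
  have hdisj : Disjoint (interior s) (interior sᶜ) :=
    disjoint_compl_right.mono interior_subset interior_subset
  exact (ht.subset_left_of_subset_union isOpen_interior isOpen_interior hdisj hcover
    ⟨x, hxt, hx⟩).trans interior_subset

section MetricSpace

variable {X α : Type*} [PseudoMetricSpace X] [ConditionallyCompleteLattice α]
  {u : X → α} {x y : X} {δ ε : ℝ}

lemma le_supClosedBall (hu : BddAbove (u '' closedBall x ε)) (hy : y ∈ closedBall x ε) :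
    u y ≤ supClosedBall u ε x :=
  le_csSup hu (mem_image_of_mem u hy)

lemma supClosedBall_le {a : α} (hε : 0 ≤ ε) (h : ∀ y ∈ closedBall x ε, u y ≤ a) :
    supClosedBall u ε x ≤ a :=
  csSup_le ((nonempty_closedBall.2 hε).image u) (forall_mem_image.2 h)

lemma le_infClosedBall {a : α} (hε : 0 ≤ ε) (h : ∀ y ∈ closedBall x ε, a ≤ u y) :
    a ≤ infClosedBall u ε x :=
  le_csInf ((nonempty_closedBall.2 hε).image u) (forall_mem_image.2 h)

lemma closedBall_subset_closedBall_add (hy : y ∈ closedBall x ε) :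
    closedBall y δ ⊆ closedBall x (δ + ε) :=
  closedBall_subset_closedBall' (add_le_add_right (mem_closedBall.1 hy) δ)

lemma bddAbove_image_closedBall_of_mem (hu : BddAbove (u '' closedBall x (δ + ε)))
    (hy : y ∈ closedBall x ε) : BddAbove (u '' closedBall y δ) :=
  hu.mono (image_mono (closedBall_subset_closedBall_add hy))

lemma supClosedBall_le_supClosedBall_add (hδ : 0 ≤ δ) (hu : BddAbove (u '' closedBall x (δ + ε)))
    (hy : y ∈ closedBall x ε) : supClosedBall u δ y ≤ supClosedBall u (δ + ε) x :=
  supClosedBall_le hδ fun _ hz => le_supClosedBall hu (closedBall_subset_closedBall_add hy hz)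

lemma le_infClosedBall_supClosedBall (hε : 0 ≤ ε) (hu : BddAbove (u '' closedBall x (ε + ε))) :
    u x ≤ infClosedBall (supClosedBall u ε) ε x :=
  le_infClosedBall hε fun _ hy =>
    le_supClosedBall (bddAbove_image_closedBall_of_mem hu hy) (mem_closedBall_comm.1 hy)

end MetricSpace

section NormedSpace

variable {E : Type*} [SeminormedAddCommGroup E] [NormedSpace ℝ E]

lemma exists_mem_closedBall_of_mem_closedBall_add {x y : E} {δ ε : ℝ} (hδ : 0 ≤ δ) (hε : 0 ≤ ε)
    (hy : y ∈ closedBall x (δ + ε)) : ∃ z ∈ closedBall x ε, y ∈ closedBall z δ := by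
  obtain ⟨z, hyz, hzx⟩ := exists_dist_le_le hδ hε (by rwa [add_comm] : dist y x ≤ ε + δ)
  exact ⟨z, hzx, hyz⟩

theorem supClosedBall_supClosedBall {α : Type*} [ConditionallyCompleteLattice α] {u : E → α}
    {x : E} {δ ε : ℝ} (hδ : 0 ≤ δ) (hε : 0 ≤ ε) (hu : BddAbove (u '' closedBall x (δ + ε))) :
    supClosedBall (supClosedBall u δ) ε x = supClosedBall u (δ + ε) x := by
  have hbound : ∀ z ∈ closedBall x ε, supClosedBall u δ z ≤ supClosedBall u (δ + ε) x :=
    fun _ hz => supClosedBall_le_supClosedBall_add hδ hu hz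
  refine le_antisymm (supClosedBall_le hε hbound)
    (supClosedBall_le (add_nonneg hδ hε) fun y hy => ?_)
  obtain ⟨z, hz, hyz⟩ := exists_mem_closedBall_of_mem_closedBall_add hδ hε hy
  calc u y ≤ supClosedBall u δ z :=
        le_supClosedBall (bddAbove_image_closedBall_of_mem hu hz) hyz
    _ ≤ supClosedBall (supClosedBall u δ) ε x :=
        le_supClosedBall ⟨_, forall_mem_image.2 hbound⟩ hz

lemma closedBall_subset_of_lt_infDist_frontier {s : Set E} {x : E} {r : ℝ} (hx : x ∈ s)
    (hr : r < infDist x (frontier s)) : closedBall x r ⊆ s := by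
  intro y hy
  have hxr : x ∈ closedBall x r := mem_closedBall_self (dist_nonneg.trans hy)
  exact subset_of_isPreconnected_of_disjoint_frontier (convex_closedBall x r).isPreconnected
    (disjoint_closedBall_of_lt_infDist hr) ⟨x, hxr, hx⟩ hy

theorem stmt1_general {u : E → ℝ} {x : E} {ε : ℝ} (hε : 0 < ε)
    (hu : BddAbove (u '' closedBall x (2 * ε))) :
    -(ε ^ 2 * infLaplacian (supClosedBall u ε) ε x) ≤
      2 * supClosedBall u ε x - supClosedBall u (2 * ε) x - u x := by
  rw [two_mul ε] at hu ⊢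
  calc -(ε ^ 2 * infLaplacian (supClosedBall u ε) ε x)
      = 2 * supClosedBall u ε x - supClosedBall (supClosedBall u ε) ε x
          - infClosedBall (supClosedBall u ε) ε x := by
        rw [infLaplacian, mul_div_cancel₀ _ (pow_ne_zero 2 hε.ne')]
        ring
    _ = 2 * supClosedBall u ε x - supClosedBall u (ε + ε) x
          - infClosedBall (supClosedBall u ε) ε x := by
        rw [supClosedBall_supClosedBall hε.le hε.le hu]
    _ ≤ 2 * supClosedBall u ε x - supClosedBall u (ε + ε) x - u x :=
        sub_le_sub_left (le_infClosedBall_supClosedBall hε.le hu) _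

end NormedSpace

/-- the elementary estimate
`−ε² Δ_∞^ε (u^ε)(x) ≤ 2 u^ε(x) − u^{2ε}(x) − u(x)` for bounded `u`. -/
theorem stmt1 {d : ℕ} (hd : 1 ≤ d) (Ω : Set (EuclideanSpace ℝ (Fin d)))
    (hΩne : Ω.Nonempty) (hΩb : Bornology.IsBounded Ω) (hΩo : IsOpen Ω)
    (u : EuclideanSpace ℝ (Fin d) → ℝ)
    (hu : Bornology.IsBounded (u '' closure Ω))
    (ε : ℝ) (hε : 0 < ε)
    (x : EuclideanSpace ℝ (Fin d)) (hx : x ∈ innerSet Ω (2 * ε)) :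
    -(ε ^ 2 * nlInfLap (upperEnv u ε) ε x) ≤
      2 * upperEnv u ε x - upperEnv u (2 * ε) x - u x := by
  have hball : closedBall x (2 * ε) ⊆ Ω := closedBall_subset_of_lt_infDist_frontier hx.1 hx.2
  exact stmt1_general hε (hu.bddAbove.mono (image_mono (hball.trans subset_closure)))
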